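/- arXiv:2311.15187 — 3 statements merged into one kernel-verified Lean document; each statement's English description precedes it below -/
import Mathlib

section
/- Let H be a group and let G = H * ℤ be the free product of H with the infinite cyclic group generated by y. Then the word metric d_{H∪{y}} on G with respect to the generating set H ∪ {y} is Gromov hyperbolic: there exists δ ≥ 0 such that the four-point condition holds for (G, d_{H∪{y}}). -/
/-! The Cayley graph of `H * ℤ` with respect to `H ∪ {y}` is a tree of cliques: the cosets `gH`
are cliques, and they are joined by the `y`-edges in the pattern of a tree. Replacing each clique
by a star of radius `1/2` gives a tree inducing the same distance on `G`, so the four-point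
condition holds with `δ = 0`.

The proof makes this explicit with normal forms. Every element is uniquely
`h₀ y^{e₁} h₁ ⋯ y^{eₙ} hₙ` with `eᵢ = ±1` and no `y^e 1 y^{-e}`; its length is `n` plus the number
of nontrivial `hᵢ`. On the set of normal forms the tree distance `FPZAux.pairDist` is defined by
recursion: common prefixes are discarded, and the two remaining lengths are added, except that two
different `H`-letters at the branching point count together as `1`. The group acts on normal forms
(`FPZAux.act`) preserving this distance (`FPZAux.pairDist_act`), since each of the generators does.
As the length of a normal form is the word length of the element it represents
(`FPZAux.wordDist_eq_pairLen`), `g ↦ g • 1` is an isometry of `G` into the normal forms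
(`FPZAux.wordDist_eq`). Since the action
is transitive it is enough to check the four-point condition when one point is the trivial word,
and there it is an induction on words (`FPZAux.tail_fourPoint`). -/

/-! Common definitions: word metrics, quasi-isometric embeddings, quasi-geodesics,
stability, Gromov hyperbolicity, acylindrical actions, and the free product `H * ℤ`. -/

/-- The word metric on a group `G` with respect to a generating set `A`:
`wordDist A g h` is the least `n` such that `g⁻¹h` is a product of `n` elements
of `A ∪ A⁻¹`. -/
noncomputable def wordDist {G : Type*} [Group G] (A : Set G) (g h : G) : ℕ :=
  sInf {n : ℕ | ∃ l : List G, l.length = n ∧ (∀ x ∈ l, x ∈ A ∪ A⁻¹) ∧ l.prod = g⁻¹ * h}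

/-- `f` is a quasi-isometric embedding of `(X, dX)` into `(Y, dY)`. -/
def IsQIE {X Y : Type*} (dX : X → X → ℝ) (dY : Y → Y → ℝ) (f : X → Y) : Prop :=
  ∃ lam C : ℝ, 1 ≤ lam ∧ 0 ≤ C ∧ ∀ x x' : X,
    lam⁻¹ * dX x x' - C ≤ dY (f x) (f x') ∧ dY (f x) (f x') ≤ lam * dX x x' + C

/-- `σ` is a `(lam, C)`-quasi-geodesic on the integer interval `{0, …, n}`
in the space `X` with distance function `d`. -/
def IsQuasiGeodesicOn {X : Type*} (d : X → X → ℝ) (lam C : ℝ) (σ : ℤ → X) (n : ℤ) : Prop :=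
  ∀ s t : ℤ, 0 ≤ s → s ≤ n → 0 ≤ t → t ≤ n →
    lam⁻¹ * |(s : ℝ) - (t : ℝ)| - C ≤ d (σ s) (σ t) ∧
    d (σ s) (σ t) ≤ lam * |(s : ℝ) - (t : ℝ)| + C

/-- The subgroup `K` of `G` (with generating set `SK` for `K` and `T` for `G`) is stable:
the inclusion is a quasi-isometric embedding, and quasi-geodesics in `G` with common
endpoints in `K` uniformly fellow-travel. -/
def Stable {G : Type*} [Group G] (T : Set G) (K : Subgroup G) (SK : Set K) : Prop :=
  IsQIE (fun a b : K => (wordDist SK a b : ℝ)) (fun a b : G => (wordDist T a b : ℝ))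
    (fun k : K => (k : G)) ∧
  ∀ lam C : ℝ, 1 ≤ lam → 0 ≤ C → ∃ M : ℝ, 0 ≤ M ∧
    ∀ (σ τ : ℤ → G) (n m : ℤ), 0 ≤ n → 0 ≤ m →
      IsQuasiGeodesicOn (fun a b : G => (wordDist T a b : ℝ)) lam C σ n →
      IsQuasiGeodesicOn (fun a b : G => (wordDist T a b : ℝ)) lam C τ m →
      σ 0 = τ 0 → σ n = τ m → σ 0 ∈ K → σ n ∈ K →
      (∀ i : ℤ, 0 ≤ i → i ≤ n → ∃ j : ℤ, 0 ≤ j ∧ j ≤ m ∧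
        (wordDist T (σ i) (τ j) : ℝ) ≤ M) ∧
      (∀ j : ℤ, 0 ≤ j → j ≤ m → ∃ i : ℤ, 0 ≤ i ∧ i ≤ n ∧
        (wordDist T (τ j) (σ i) : ℝ) ≤ M)

/-- The four-point condition: `(X, d)` is Gromov hyperbolic. -/
def GromovHyperbolicD {X : Type*} (d : X → X → ℝ) : Prop :=
  ∃ δ : ℝ, 0 ≤ δ ∧ ∀ w x y z : X,
    d w x + d y z ≤ max (d w y + d x z) (d w z + d x y) + 2 * δ

/-- The left-multiplication action of `G` on itself with distance function `d`
is acylindrical. -/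
def AcylindricalLeftMul {G : Type*} [Group G] (d : G → G → ℝ) : Prop :=
  ∀ R : ℝ, 0 ≤ R → ∃ (N : ℕ) (L : ℝ), 0 < N ∧ 0 < L ∧
    ∀ x y : G, L ≤ d x y →
      {g : G | d x (g * x) ≤ R ∧ d y (g * y) ≤ R}.Finite ∧
      {g : G | d x (g * x) ≤ R ∧ d y (g * y) ≤ R}.ncard ≤ N

/-- `φ` is an isometric action of the group `G` on the metric space `X`. -/
def IsIsometricAction {G X : Type*} [Group G] [MetricSpace X] (φ : G → X → X) : Prop :=
  (∀ x : X, φ 1 x = x) ∧ (∀ g h : G, ∀ x : X, φ (g * h) x = φ g (φ h x)) ∧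
    (∀ g : G, ∀ x y : X, dist (φ g x) (φ g y) = dist x y)

/-- The action `φ` of `G` on the metric space `X` is acylindrical. -/
def AcylindricalAction {G X : Type*} [Group G] [MetricSpace X] (φ : G → X → X) : Prop :=
  ∀ R : ℝ, 0 ≤ R → ∃ (N : ℕ) (L : ℝ), 0 < N ∧ 0 < L ∧
    ∀ x y : X, L ≤ dist x y →
      {g : G | dist x (φ g x) ≤ R ∧ dist y (φ g y) ≤ R}.Finite ∧
      {g : G | dist x (φ g x) ≤ R ∧ dist y (φ g y) ≤ R}.ncard ≤ N

/-- A metric space is geodesic if any two points are joined by a geodesic. -/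
def GeodesicSpace (X : Type*) [MetricSpace X] : Prop :=
  ∀ x y : X, ∃ γ : ℝ → X, γ 0 = x ∧ γ (dist x y) = y ∧
    ∀ s t : ℝ, s ∈ Set.Icc 0 (dist x y) → t ∈ Set.Icc 0 (dist x y) →
      dist (γ s) (γ t) = |s - t|

/-- A group is virtually cyclic if it has a cyclic subgroup of finite index. -/
def VirtuallyCyclic (G : Type*) [Group G] : Prop :=
  ∃ K : Subgroup G, IsCyclic ↥K ∧ K.index ≠ 0

/-- The free product `H * ℤ`. -/
abbrev FPZ (H : Type*) [Group H] : Type _ := Monoid.Coprod H (Multiplicative ℤ)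

/-- The canonical embedding `H →* H * ℤ`. -/
def fpzInl (H : Type*) [Group H] : H →* FPZ H := Monoid.Coprod.inl

/-- The generator `y` of the `ℤ` factor of `H * ℤ`. -/
def fpzY (H : Type*) [Group H] : FPZ H := Monoid.Coprod.inr (Multiplicative.ofAdd 1)

/-! ### The tree distance on words -/

namespace FPZAux

open Monoid Classical

variable {H : Type*} [Group H]

/-- The number of generators needed for an element of `H`: `0` for the identity, else `1`. -/
noncomputable def hLen (h : H) : ℕ := if h = 1 then 0 else 1

/-- The length of a word `y^{e₁} h₁ ⋯ y^{eₙ} hₙ`, encoded as the list of the pairs `(eᵢ, hᵢ)`,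
where `true` stands for the exponent `1` and `false` for `-1`. -/
noncomputable def tailLen : List (Bool × H) → ℕ
  | [] => 0
  | (_, h) :: t => 1 + hLen h + tailLen t

/-- The tree distance between two words beginning with a power of `y` (or empty). -/
noncomputable def tailDist : List (Bool × H) → List (Bool × H) → ℕ
  | [], s => tailLen s
  | t, [] => tailLen t
  | (b, h) :: t, (c, k) :: s =>
    if b = c then (if h = k then tailDist t s else tailLen t + tailLen s + 1)
    else (1 + hLen h + tailLen t) + (1 + hLen k + tailLen s)

/-- The length of `h₀ y^{e₁} h₁ ⋯ y^{eₙ} hₙ`, encoded as `(h₀, [(e₁, h₁), …, (eₙ, hₙ)])`. -/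
noncomputable def pairLen (p : H × List (Bool × H)) : ℕ := hLen p.1 + tailLen p.2

/-- The tree distance between two words. -/
noncomputable def pairDist (p q : H × List (Bool × H)) : ℕ :=
  if p.1 = q.1 then tailDist p.2 q.2 else tailLen p.2 + tailLen q.2 + 1

lemma hLen_le (h : H) : hLen h ≤ 1 := by unfold hLen; split_ifs <;> simp

@[simp] lemma hLen_one : hLen (1 : H) = 0 := by simp [hLen]

lemma hLen_of_ne {h : H} (hh : h ≠ 1) : hLen h = 1 := by simp [hLen, hh]

/-- Two different elements of `H` are not both trivial. -/
lemma one_le_hLen_add {h k : H} (hk : h ≠ k) : 1 ≤ hLen h + hLen k := by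
  unfold hLen
  split_ifs with h1 h2
  · exact absurd (h1.trans h2.symm) hk
  all_goals omega

@[simp] lemma tailDist_nil_left (s : List (Bool × H)) : tailDist [] s = tailLen s := by
  simp [tailDist]

@[simp] lemma tailDist_nil_right (s : List (Bool × H)) : tailDist s [] = tailLen s := by
  cases s <;> simp [tailDist, tailLen]

lemma tailDist_comm (t s : List (Bool × H)) : tailDist t s = tailDist s t := by
  induction t generalizing s with
  | nil => simp
  | cons a t ih =>
    rcases s with _ | ⟨⟨c, k⟩, s⟩
    · simp
    · simp only [tailDist, ih s, eq_comm (a := c), eq_comm (a := k)]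
      split_ifs <;> omega

lemma pairDist_comm (p q : H × List (Bool × H)) : pairDist p q = pairDist q p := by
  simp only [pairDist, tailDist_comm p.2, eq_comm (a := p.1), add_comm (tailLen p.2)]

lemma tailDist_le (t s : List (Bool × H)) : tailDist t s ≤ tailLen t + tailLen s := by
  induction t generalizing s with
  | nil => simp
  | cons a t ih =>
    obtain ⟨b, h⟩ := a
    rcases s with _ | ⟨⟨c, k⟩, s⟩
    · simp
    · have := ih s
      simp only [tailDist, tailLen]
      split_ifs <;> omega

/-- The four-point condition, with constant `0`, for the empty word and three other words. -/
lemma tail_fourPoint (t s r : List (Bool × H)) :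
    tailLen t + tailDist s r ≤ max (tailLen s + tailDist t r) (tailLen r + tailDist t s) := by
  induction t generalizing s r with
  | nil => have := tailDist_le s r; simp [tailLen]; omega
  | cons a t ih =>
    rcases s with _ | ⟨⟨c, k⟩, s⟩
    · simp; omega
    rcases r with _ | ⟨⟨e, l⟩, r⟩
    · simp; omega
    obtain ⟨b, h⟩ := a
    have := ih s r
    have := tailDist_le t s
    have := tailDist_le t r
    have := tailDist_le s r
    have := hLen_le h
    have := hLen_le k
    have := hLen_le l
    have := @one_le_hLen_add _ _ h k
    have := @one_le_hLen_add _ _ h l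
    have := @one_le_hLen_add _ _ k l
    simp only [tailDist, tailLen]
    split_ifs <;> subst_vars <;> first | omega | grind

lemma pair_fourPoint (p q r : H × List (Bool × H)) :
    pairLen p + pairDist q r ≤ max (pairLen q + pairDist p r) (pairLen r + pairDist p q) := by
  obtain ⟨h, t⟩ := p
  obtain ⟨k, s⟩ := q
  obtain ⟨l, r⟩ := r
  -- Prefixing all three words with the letter `y` reduces this to the case of tails.
  have := tail_fourPoint ((true, h) :: t) ((true, k) :: s) ((true, l) :: r)
  simp only [tailDist, tailLen, if_true] at this
  simp only [pairLen, pairDist]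
  omega

@[simp] lemma pairDist_one (p : H × List (Bool × H)) : pairDist (1, []) p = pairLen p := by
  obtain ⟨h, t⟩ := p
  by_cases hh : h = 1
  · simp [pairDist, pairLen, hh]
  · simp [pairDist, pairLen, Ne.symm hh, hLen_of_ne hh, tailLen, add_comm]

/-! ### The action on normal forms -/

/-- A word is reduced when it has no subword `y^e 1 y^{-e}`. -/
def Red (l : List (Bool × H)) : Prop :=
  l.IsChain (fun a b => ¬ (a.2 = 1 ∧ b.1 = !a.1))

/-- Normal forms; there is no condition on the leading `H`-letter. -/
abbrev NF (H : Type*) [Group H] := {p : H × List (Bool × H) // Red p.2}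

/-- The trivial word. -/
def base : NF H := ⟨(1, []), List.IsChain.nil⟩

/-- Left multiplication by `y` (for `b = true`) or `y⁻¹` (for `b = false`), with cancellation. -/
noncomputable def step (b : Bool) : H × List (Bool × H) → H × List (Bool × H)
  | (h, []) => (1, [(b, h)])
  | (h, (c, k) :: t) => if h = 1 ∧ c = !b then (k, t) else (1, (b, h) :: (c, k) :: t)

lemma red_step (b : Bool) (p : H × List (Bool × H)) (hp : Red p.2) : Red (step b p).2 := by
  obtain ⟨h, _ | ⟨⟨c, k⟩, t⟩⟩ := p
  · simp [step, Red]
  · simp only [step]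
    split_ifs with hc
    · exact List.IsChain.tail hp
    · exact List.isChain_cons_cons.2 ⟨hc, hp⟩

lemma step_step (b : Bool) (p : H × List (Bool × H)) (hp : Red p.2) :
    step b (step (!b) p) = p := by
  obtain ⟨h, _ | ⟨⟨c, k⟩, t⟩⟩ := p
  · simp [step]
  · by_cases hc : h = 1 ∧ c = !!b
    · obtain ⟨rfl, rfl⟩ := hc
      -- After the first cancellation a second one is excluded by reducedness.
      rcases t with _ | ⟨⟨e, l⟩, t⟩
      · simp [step]
      · have := (List.isChain_cons_cons.1 hp).1
        simp_all [step]
    · simp only [step, if_neg hc]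
      simp

/-- Left multiplication by `y^{±1}` preserves the tree distance. If it cancels in neither word, a
common first letter is added; if it cancels in both, one is removed. If it cancels in one word only,
then by reducedness the words have no common prefix before or after, and both distances are sums
of lengths. -/
lemma pairDist_step (b : Bool) (p q : H × List (Bool × H)) (hp : Red p.2) (hq : Red q.2) :
    pairDist (step b p) (step b q) = pairDist p q := by
  -- The case where cancellation takes place in exactly one of the two words.
  have key1 : ∀ (k : H) (t : List (Bool × H)) (h : H) (s : List (Bool × H)),
      Red ((!b, k) :: t) → step b (h, s) = (1, (b, h) :: s) →
      pairDist (k, t) (1, (b, h) :: s) = pairDist (1, (!b, k) :: t) (h, s) := by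
    intro k t h s hr hs
    have e1 : pairDist (k, t) (1, (b, h) :: s) = hLen k + tailLen t + (1 + hLen h + tailLen s) := by
      by_cases hk : k = 1
      · subst hk
        rcases t with _ | ⟨⟨e, l⟩, t⟩
        · simp [pairDist, tailLen]
        · have he : ¬ e = b := by simpa using (List.isChain_cons_cons.1 hr).1
          simp [pairDist, tailDist, tailLen, he]
      · simp only [pairDist, if_neg hk, hLen_of_ne hk, tailLen]
        omega
    have e2 : pairDist (1, (!b, k) :: t) (h, s) = (1 + hLen k + tailLen t) + (hLen h + tailLen s) := by
      by_cases hh : h = 1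
      · subst hh
        rcases s with _ | ⟨⟨f, m⟩, s⟩
        · simp [pairDist, tailLen]
        · have hf : ¬ (!b) = f := by
            rintro rfl
            simp only [step, true_and, if_true, Prod.mk.injEq] at hs
            have := congrArg List.length hs.2
            simp only [List.length_cons] at this
            omega
          simp [pairDist, tailDist, tailLen, hf]
      · simp only [pairDist, if_neg (Ne.symm hh), hLen_of_ne hh, tailLen]
        omega
    omega
  have dich : ∀ (p : H × List (Bool × H)),
      (step b p = (1, (b, p.1) :: p.2)) ∨
      ∃ k t, p = (1, (!b, k) :: t) ∧ step b p = (k, t) := by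
    rintro ⟨h, _ | ⟨⟨c, k⟩, t⟩⟩
    · simp [step]
    · by_cases hc : h = 1 ∧ c = !b
      · obtain ⟨rfl, rfl⟩ := hc
        exact Or.inr ⟨k, t, rfl, by simp [step]⟩
      · left; simp only [step, if_neg hc]
  rcases dich p with h1 | ⟨k, t, rfl, h1⟩ <;> rcases dich q with h2 | ⟨l, s, rfl, h2⟩
  · rw [h1, h2]; simp [pairDist, tailDist]
  · rw [h1, h2]; rw [pairDist_comm, key1 _ _ _ _ hq h1, pairDist_comm]
  · rw [h1, h2]; exact key1 _ _ _ _ hp h2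
  · rw [h1, h2]; simp [pairDist, tailDist]

lemma pairLen_step (b : Bool) (p : H × List (Bool × H)) :
    pairLen (step b p) ≤ pairLen p + 1 := by
  obtain ⟨h, _ | ⟨⟨c, k⟩, t⟩⟩ := p
  · simp [step, pairLen, tailLen]; omega
  · simp only [step]
    split_ifs <;> simp [pairLen, tailLen] <;> omega

/-- Left multiplication by `y` as a permutation of the normal forms. -/
noncomputable def yPerm : Equiv.Perm (NF H) where
  toFun p := ⟨step true p.1, red_step _ _ p.2⟩
  invFun p := ⟨step false p.1, red_step _ _ p.2⟩
  left_inv p := Subtype.ext (step_step false p.1 p.2)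
  right_inv p := Subtype.ext (step_step true p.1 p.2)

/-- Left multiplication by elements of `H` on the normal forms. -/
def hPerm : H →* Equiv.Perm (NF H) where
  toFun h :=
    { toFun := fun p => ⟨(h * p.1.1, p.1.2), p.2⟩
      invFun := fun p => ⟨(h⁻¹ * p.1.1, p.1.2), p.2⟩
      left_inv := fun p => by simp
      right_inv := fun p => by simp }
  map_one' := by ext p <;> simp
  map_mul' a b := by ext p <;> simp [mul_assoc]

/-- The action of `H * ℤ` on normal forms by left multiplication. -/
noncomputable def act : FPZ H →* Equiv.Perm (NF H) :=
  Coprod.lift hPerm (zpowersHom _ yPerm)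

lemma act_inl (h : H) : act (fpzInl H h) = hPerm h := by simp [act, fpzInl]

lemma act_y : act (fpzY H) = yPerm := by simp [act, fpzY]

/-- The group `H * ℤ` is generated by `H` and `y`. -/
lemma mem_of_gens (K : Subgroup (FPZ H)) (h1 : ∀ h, fpzInl H h ∈ K) (h2 : fpzY H ∈ K)
    (g : FPZ H) : g ∈ K := by
  induction g using Coprod.induction_on with
  | inl h => exact h1 h
  | inr n =>
    have : (Coprod.inr n : FPZ H) = fpzY H ^ (Multiplicative.toAdd n) := by
      rw [fpzY, ← map_zpow, ← ofAdd_zsmul]; simp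
    rw [this]; exact K.zpow_mem h2 _
  | mul a b ha hb => exact K.mul_mem ha hb

lemma pairDist_act (g : FPZ H) (p q : NF H) :
    pairDist (act g p).1 (act g q).1 = pairDist p.1 q.1 := by
  let K : Subgroup (FPZ H) :=
    { carrier := {g | ∀ p q : NF H, pairDist (act g p).1 (act g q).1 = pairDist p.1 q.1}
      one_mem' := by simp
      mul_mem' := fun {a b} ha hb p q => by
        rw [map_mul, Equiv.Perm.mul_apply, Equiv.Perm.mul_apply, ha, hb]
      inv_mem' := fun {a} ha p q => by
        have := ha (act a⁻¹ p) (act a⁻¹ q)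
        simpa using this.symm }
  refine mem_of_gens K (fun h p q => ?_) (fun p q => ?_) g p q
  · rw [act_inl]; simp [hPerm, pairDist]
  · rw [act_y]; exact pairDist_step true _ _ p.2 q.2

/-! ### Word length -/

/-- The generator `y` or its inverse. -/
def yPow (b : Bool) : FPZ H := if b then fpzY H else (fpzY H)⁻¹

/-- The group element represented by a word beginning with a power of `y`. -/
def tailEval : List (Bool × H) → FPZ H
  | [] => 1
  | (b, h) :: t => yPow b * fpzInl H h * tailEval t

/-- The group element represented by a word. -/
def pairEval (p : H × List (Bool × H)) : FPZ H := fpzInl H p.1 * tailEval p.2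

lemma yPow_mul (b : Bool) : (yPow b : FPZ H) * yPow (!b) = 1 := by cases b <;> simp [yPow]

lemma pairEval_step (b : Bool) (p : H × List (Bool × H)) :
    pairEval (step b p) = yPow b * pairEval p := by
  obtain ⟨h, _ | ⟨⟨c, k⟩, t⟩⟩ := p
  · simp [step, pairEval, tailEval]
  · simp only [step]
    split_ifs with hc
    · obtain ⟨rfl, rfl⟩ := hc
      simp only [pairEval, tailEval, map_one, one_mul]
      rw [← mul_assoc, ← mul_assoc, yPow_mul, one_mul]
    · simp [pairEval, tailEval, mul_assoc]

lemma pairEval_act (g : FPZ H) (p : NF H) : pairEval (act g p).1 = g * pairEval p.1 := by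
  let K : Subgroup (FPZ H) :=
    { carrier := {g | ∀ p : NF H, pairEval (act g p).1 = g * pairEval p.1}
      one_mem' := by simp
      mul_mem' := fun {a b} ha hb p => by
        rw [map_mul, Equiv.Perm.mul_apply, ha, hb, mul_assoc]
      inv_mem' := fun {a} ha p => by
        have := ha (act a⁻¹ p)
        rw [eq_inv_mul_iff_mul_eq, ← this]
        simp }
  refine mem_of_gens K (fun h p => ?_) (fun p => ?_) g p
  · rw [act_inl]; simp [hPerm, pairEval, mul_assoc]
  · rw [act_y]; exact pairEval_step true p.1

/-- The symmetrized generating set `H ∪ {y, y⁻¹}`. -/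
abbrev gens (H : Type*) [Group H] : Set (FPZ H) :=
  (Set.range (⇑(fpzInl H)) ∪ {fpzY H}) ∪ (Set.range (⇑(fpzInl H)) ∪ {fpzY H})⁻¹

lemma yPow_mem (b : Bool) : (yPow b : FPZ H) ∈ gens H := by
  cases b <;> simp [yPow]

lemma exists_word_inl (h : H) : ∃ l : List (FPZ H), l.length = hLen h ∧
    (∀ x ∈ l, x ∈ gens H) ∧ l.prod = fpzInl H h := by
  by_cases hh : h = 1
  · exact ⟨[], by simp [hh]⟩
  · exact ⟨[fpzInl H h], by simp [hLen_of_ne hh]⟩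

lemma exists_word_tail (t : List (Bool × H)) : ∃ l : List (FPZ H), l.length = tailLen t ∧
    (∀ x ∈ l, x ∈ gens H) ∧ l.prod = tailEval t := by
  induction t with
  | nil => exact ⟨[], by simp [tailLen, tailEval]⟩
  | cons a t ih =>
    obtain ⟨b, h⟩ := a
    obtain ⟨l, hl, hm, hp⟩ := ih
    obtain ⟨l', hl', hm', hp'⟩ := exists_word_inl h
    refine ⟨yPow b :: (l' ++ l), ?_, ?_, ?_⟩
    · simp [tailLen, hl, hl']; omega
    · intro x hx
      rcases List.mem_cons.1 hx with rfl | hx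
      · exact yPow_mem b
      · exact (List.mem_append.1 hx).elim (hm' x) (hm x)
    · simp [tailEval, hp, hp', mul_assoc]

/-- The upper bound for the word length: a word of length `n` evaluates to a product of `n`
generators. -/
lemma exists_word (p : H × List (Bool × H)) : ∃ l : List (FPZ H), l.length = pairLen p ∧
    (∀ x ∈ l, x ∈ gens H) ∧ l.prod = pairEval p := by
  obtain ⟨l, hl, hm, hp⟩ := exists_word_tail p.2
  obtain ⟨l', hl', hm', hp'⟩ := exists_word_inl p.1
  exact ⟨l' ++ l, by simp [pairLen, hl, hl'],
    fun x hx => (List.mem_append.1 hx).elim (hm' x) (hm x), by simp [pairEval, hp, hp']⟩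

lemma pairLen_hPerm (h : H) (p : NF H) : pairLen (hPerm h p).1 ≤ pairLen p.1 + 1 := by
  have := hLen_le (h * p.1.1)
  simp [hPerm, pairLen]; omega

lemma pairLen_act_gen (x : FPZ H) (hx : x ∈ gens H) (p : NF H) :
    pairLen (act x p).1 ≤ pairLen p.1 + 1 := by
  rcases hx with (⟨h, rfl⟩ | hx) | (⟨h, hx⟩ | hx)
  · rw [act_inl]; exact pairLen_hPerm h p
  · rw [Set.mem_singleton_iff.1 hx, act_y]; exact pairLen_step true p.1
  · have : x = fpzInl H h⁻¹ := by rw [map_inv, hx, inv_inv]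
    rw [this, act_inl]; exact pairLen_hPerm _ p
  · rw [← inv_inv x, Set.mem_singleton_iff.1 hx, map_inv, act_y]; exact pairLen_step false p.1

/-- The lower bound for the word length: a product of `n` generators has a normal form of length at
most `n`. -/
lemma pairLen_prod (l : List (FPZ H)) (hl : ∀ x ∈ l, x ∈ gens H) :
    pairLen (act l.prod base).1 ≤ l.length := by
  induction l with
  | nil => simp [base, pairLen, tailLen]
  | cons a l ih =>
    have h1 := ih fun x hx => hl x (List.mem_cons_of_mem _ hx)
    have h2 := pairLen_act_gen a (hl a List.mem_cons_self) (act l.prod base)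
    rw [List.prod_cons, map_mul, Equiv.Perm.mul_apply, List.length_cons]
    omega

lemma wordDist_eq_pairLen (a b : FPZ H) :
    wordDist (Set.range (⇑(fpzInl H)) ∪ {fpzY H}) a b = pairLen (act (a⁻¹ * b) base).1 := by
  have hmem : pairLen (act (a⁻¹ * b) base).1 ∈ {n : ℕ | ∃ l : List (FPZ H), l.length = n ∧
      (∀ x ∈ l, x ∈ gens H) ∧ l.prod = a⁻¹ * b} := by
    obtain ⟨l, hl, hm, hp⟩ := exists_word (act (a⁻¹ * b) base).1
    refine ⟨l, hl, hm, ?_⟩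
    rw [hp, pairEval_act]
    simp [base, pairEval, tailEval]
  refine le_antisymm (Nat.sInf_le hmem) (le_csInf ⟨_, hmem⟩ ?_)
  rintro n ⟨l, rfl, hm, hp⟩
  rw [← hp]
  exact pairLen_prod l hm

/-- After translating by any `w`, the orbit map `g ↦ g • 1` is an isometry onto its image. -/
lemma wordDist_eq (w a b : FPZ H) :
    wordDist (Set.range (⇑(fpzInl H)) ∪ {fpzY H}) a b =
      pairDist (act (w⁻¹ * a) base).1 (act (w⁻¹ * b) base).1 := by
  have := pairDist_act (w⁻¹ * a) base (act (a⁻¹ * b) base)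
  rw [← Equiv.Perm.mul_apply, ← map_mul, show w⁻¹ * a * (a⁻¹ * b) = w⁻¹ * b by group] at this
  rw [this, wordDist_eq_pairLen]
  exact (pairDist_one _).symm

end FPZAux

/-- The word metric on `G = H * ℤ` with respect to `H ∪ {y}` is
Gromov hyperbolic (four-point condition). -/
theorem relative_cayley_graph_hyperbolic (H : Type*) [Group H] :
    GromovHyperbolicD
      (fun a b : FPZ H => (wordDist (Set.range (⇑(fpzInl H)) ∪ {fpzY H}) a b : ℝ)) := by
  refine ⟨0, le_rfl, fun w x y z => ?_⟩
  have h := FPZAux.pair_fourPoint (FPZAux.act (w⁻¹ * x) FPZAux.base).1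
    (FPZAux.act (w⁻¹ * y) FPZAux.base).1 (FPZAux.act (w⁻¹ * z) FPZAux.base).1
  simp only [← FPZAux.wordDist_eq_pairLen, ← FPZAux.wordDist_eq] at h
  simp only [mul_zero, add_zero]
  exact_mod_cast h
end

section
/- Let H be a group and let G = H * ℤ be the free product of H with the infinite cyclic group generated by y. Then the action of G on (G, d_{H∪{y}}) by left multiplication is acylindrical, where d_{H∪{y}} is the word metric on G with respect to the generating set H ∪ {y}. -/
open Set

section FreeProductCut

variable {H : Type*} [Group H]

/-! ### The Fox derivative and cut sets -/

open Classical in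
/-- The homomorphism `g ↦ (∂g, g)` into `(G → ℤ) ⋊ G` which encodes the Fox derivative. The
coefficients are written multiplicatively. -/
noncomputable def foxHom (H : Type*) [Group H] :
    FPZ H →* (FPZ H → Multiplicative ℤ) ⋊[mulAutArrow] (FPZ H) :=
  Monoid.Coprod.lift (SemidirectProduct.inr.comp (fpzInl H))
    (zpowersHom _ ⟨Pi.mulSingle 1 (Multiplicative.ofAdd 1), fpzY H⟩)

/-- The Fox derivative with respect to `y`: the crossed homomorphism `G → (G → ℤ)` that vanishes
on `H` and sends `y` to the indicator function of `1`. -/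
noncomputable def fox (g : FPZ H) : FPZ H → Multiplicative ℤ := (foxHom H g).left

/-- The support of the Fox derivative: the edges of the Bass–Serre tree which separate the base
vertex from its translate by `g`. -/
def cut (g : FPZ H) : Set (FPZ H) := {x | fox g x ≠ 1}

lemma foxHom_right (g : FPZ H) : (foxHom H g).right = g := by
  have h : SemidirectProduct.rightHom.comp (foxHom H) = MonoidHom.id (FPZ H) := by
    apply Monoid.Coprod.hom_ext
    · ext h
      simp [foxHom, fpzInl]
    · ext
      simp [foxHom, fpzY]
  exact DFunLike.congr_fun h g

lemma fox_mul (a b x : FPZ H) : fox (a * b) x = fox a x * fox b (a⁻¹ * x) := by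
  simp only [fox, map_mul, SemidirectProduct.mul_left, foxHom_right]
  rfl

lemma fox_inl (h : H) (x : FPZ H) : fox (fpzInl H h) x = 1 := by
  simp [fox, foxHom, fpzInl]

lemma fox_one (x : FPZ H) : fox (1 : FPZ H) x = 1 := by
  simp [fox]

lemma fox_y (x : FPZ H) : fox (fpzY H) x ≠ 1 ↔ x = 1 := by
  classical
  have : fox (fpzY H) =
      Pi.mulSingle (M := fun _ : FPZ H => Multiplicative ℤ) 1 (Multiplicative.ofAdd 1) := by
    simp [fox, foxHom, fpzY]
  rw [this]
  by_cases hx : x = 1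
  · subst hx
    simp
  · simp [hx]

lemma cut_mul_inl (g : FPZ H) (h : H) : cut (g * fpzInl H h) = cut g := by
  ext x
  simp [cut, fox_mul, fox_inl]

lemma fox_mul_y_of_ne {g x : FPZ H} (hx : x ≠ g) : fox (g * fpzY H) x = fox g x := by
  have : fox (fpzY H) (g⁻¹ * x) = 1 := by
    by_contra h
    exact hx (inv_mul_eq_one.1 ((fox_y _).1 h)).symm
  rw [fox_mul, this, mul_one]

lemma fox_mul_y_self (g : FPZ H) : fox (g * fpzY H) g ≠ fox g g := by
  rw [fox_mul, inv_mul_cancel]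
  intro h
  exact (fox_y (1 : FPZ H)).2 rfl (mul_eq_left.1 h)

lemma fox_mul_y_inv_of_ne {g x : FPZ H} (hx : x ≠ g * (fpzY H)⁻¹) :
    fox (g * (fpzY H)⁻¹) x = fox g x := by
  have := fox_mul_y_of_ne hx
  rwa [inv_mul_cancel_right, eq_comm] at this

lemma fox_mul_y_inv_self (g : FPZ H) :
    fox (g * (fpzY H)⁻¹) (g * (fpzY H)⁻¹) ≠ fox g (g * (fpzY H)⁻¹) := by
  have := fox_mul_y_self (g * (fpzY H)⁻¹)
  rwa [inv_mul_cancel_right, ne_comm] at this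

lemma cut_mul_y_subset (g : FPZ H) : cut (g * fpzY H) ⊆ insert g (cut g) := by
  intro x hx
  by_cases h : x = g
  · exact Or.inl h
  · right
    rwa [cut, mem_ofPred_eq, fox_mul_y_of_ne h] at hx

lemma cut_mul_y_inv_subset (g : FPZ H) :
    cut (g * (fpzY H)⁻¹) ⊆ insert (g * (fpzY H)⁻¹) (cut g) := by
  intro x hx
  by_cases h : x = g * (fpzY H)⁻¹
  · exact Or.inl h
  · right
    rwa [cut, mem_ofPred_eq, fox_mul_y_inv_of_ne h] at hx

lemma cut_mul_y {g : FPZ H} (hg : g ∉ cut g) : cut (g * fpzY H) = insert g (cut g) := by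
  refine (cut_mul_y_subset g).antisymm ?_
  have hg' : fox g g = 1 := not_not.1 hg
  rintro x (rfl | hx)
  · have := fox_mul_y_self x
    rwa [hg'] at this
  · have : x ≠ g := fun h => hg (h ▸ hx)
    rwa [cut, mem_ofPred_eq, fox_mul_y_of_ne this]

lemma cut_mul_y_inv {g : FPZ H} (hg : g * (fpzY H)⁻¹ ∉ cut g) :
    cut (g * (fpzY H)⁻¹) = insert (g * (fpzY H)⁻¹) (cut g) := by
  refine (cut_mul_y_inv_subset g).antisymm ?_
  have hg' : fox g (g * (fpzY H)⁻¹) = 1 := not_not.1 hg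
  rintro x (rfl | hx)
  · have := fox_mul_y_inv_self g
    rwa [hg'] at this
  · have : x ≠ g * (fpzY H)⁻¹ := fun h => hg (h ▸ hx)
    rwa [cut, mem_ofPred_eq, fox_mul_y_inv_of_ne this]

/-! ### Tree length -/

/-- `Reach n g`: some word for `g` in `H ∪ {y, y⁻¹}` has exactly `n` letters `y^{±1}`. -/
inductive Reach : ℕ → FPZ H → Prop
  | one : Reach 0 1
  | mul_inl {n : ℕ} {g : FPZ H} (h : H) : Reach n g → Reach n (g * fpzInl H h)
  | mul_y {n : ℕ} {g : FPZ H} : Reach n g → Reach (n + 1) (g * fpzY H)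
  | mul_y_inv {n : ℕ} {g : FPZ H} : Reach n g → Reach (n + 1) (g * (fpzY H)⁻¹)

lemma Reach.mul {m n : ℕ} {a b : FPZ H} (ha : Reach m a) (hb : Reach n b) :
    Reach (m + n) (a * b) := by
  induction hb with
  | one => simpa using ha
  | mul_inl h _ ih => rw [← mul_assoc]; exact ih.mul_inl h
  | mul_y _ ih => rw [← mul_assoc]; exact ih.mul_y
  | mul_y_inv _ ih => rw [← mul_assoc]; exact ih.mul_y_inv

lemma Reach.inl (h : H) : Reach 0 (fpzInl H h) := by
  simpa using Reach.one.mul_inl h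

lemma Reach.y : Reach 1 (fpzY H) := by
  simpa using (Reach.one (H := H)).mul_y

lemma Reach.y_inv : Reach 1 (fpzY H)⁻¹ := by
  simpa using (Reach.one (H := H)).mul_y_inv

lemma exists_reach (g : FPZ H) : ∃ n, Reach n g := by
  induction g using Monoid.Coprod.induction_on with
  | inl h => exact ⟨0, Reach.inl h⟩
  | inr z =>
    have hz : (Monoid.Coprod.inr z : FPZ H) = fpzY H ^ (Multiplicative.toAdd z) := by
      rw [fpzY, ← map_zpow, ← ofAdd_zsmul]
      simp
    rw [hz]
    induction Multiplicative.toAdd z using Int.induction_on with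
    | zero => exact ⟨0, by simpa using Reach.one⟩
    | succ i ih =>
      obtain ⟨n, hn⟩ := ih
      exact ⟨n + 1, by rw [zpow_add_one]; exact hn.mul_y⟩
    | pred i ih =>
      obtain ⟨n, hn⟩ := ih
      exact ⟨n + 1, by rw [zpow_sub_one]; exact hn.mul_y_inv⟩
  | mul a b ha hb =>
    obtain ⟨m, hm⟩ := ha
    obtain ⟨n, hn⟩ := hb
    exact ⟨_, hm.mul hn⟩

/-- The least number of letters `y^{±1}` in a word for `g`. -/
noncomputable def treeLen (g : FPZ H) : ℕ := sInf {n | Reach n g}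

lemma reach_treeLen (g : FPZ H) : Reach (treeLen g) g := Nat.sInf_mem (exists_reach g)

lemma treeLen_le {n : ℕ} {g : FPZ H} (h : Reach n g) : treeLen g ≤ n := Nat.sInf_le h

lemma treeLen_mul_le (a b : FPZ H) : treeLen (a * b) ≤ treeLen a + treeLen b :=
  treeLen_le ((reach_treeLen a).mul (reach_treeLen b))

lemma treeLen_mul_inl (g : FPZ H) (h : H) : treeLen (g * fpzInl H h) = treeLen g := by
  refine le_antisymm (treeLen_le ((reach_treeLen g).mul_inl h)) ?_
  have := (reach_treeLen (g * fpzInl H h)).mul_inl h⁻¹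
  rw [map_inv, mul_inv_cancel_right] at this
  exact treeLen_le this

lemma treeLen_mul_y_le (g : FPZ H) : treeLen (g * fpzY H) ≤ treeLen g + 1 :=
  treeLen_le (reach_treeLen g).mul_y

lemma treeLen_mul_y_inv_le (g : FPZ H) : treeLen (g * (fpzY H)⁻¹) ≤ treeLen g + 1 :=
  treeLen_le (reach_treeLen g).mul_y_inv

/-- A path ending at `g` runs through both endpoints of every edge in `cut g`. -/
lemma treeLen_le_of_mem_cut {n : ℕ} {g : FPZ H} (hg : Reach n g) {f : FPZ H} (hf : f ∈ cut g) :
    treeLen f ≤ n ∧ treeLen (f * fpzY H) ≤ n := by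
  induction hg with
  | one => exact absurd (fox_one f) hf
  | mul_inl h _ ih =>
    rw [cut_mul_inl] at hf
    exact ih hf
  | mul_y hg ih =>
    rcases cut_mul_y_subset _ hf with rfl | hf
    · exact ⟨(treeLen_le hg).trans (Nat.le_succ _), treeLen_le hg.mul_y⟩
    · have := ih hf
      omega
  | mul_y_inv hg ih =>
    rcases cut_mul_y_inv_subset _ hf with rfl | hf
    · refine ⟨treeLen_le hg.mul_y_inv, ?_⟩
      rw [inv_mul_cancel_right]
      exact (treeLen_le hg).trans (Nat.le_succ _)
    · have := ih hf
      omega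

/-- The edges of `cut g` at tree distance at most `k` from the base vertex. -/
def cutBall (g : FPZ H) (k : ℕ) : Set (FPZ H) := {e | e ∈ cut g ∧ treeLen e ≤ k}

lemma cut_finite (g : FPZ H) : (cut g).Finite := by
  obtain ⟨n, hn⟩ := exists_reach g
  induction hn with
  | one => exact Set.Finite.subset finite_empty fun x hx => hx (fox_one x)
  | mul_inl h _ ih => rwa [cut_mul_inl]
  | mul_y _ ih => exact (ih.insert _).subset (cut_mul_y_subset _)
  | mul_y_inv _ ih => exact (ih.insert _).subset (cut_mul_y_inv_subset _)

lemma cutBall_finite (g : FPZ H) (k : ℕ) : (cutBall g k).Finite :=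
  (cut_finite g).subset fun _ h => h.1

/-- Adding one new edge, at distance `n` or `n + 1`, to `n` edges. -/
lemma cutBall_step {n : ℕ} {g g' e : FPZ H} (hcut : cut g' = insert e (cut g)) (he : e ∉ cut g)
    (hlo : n ≤ treeLen e) (hhi : treeLen e ≤ n + 1)
    (ih : ∀ k, min n k ≤ (cutBall g k).ncard ∧ (cutBall g k).ncard ≤ min n (k + 1)) (k : ℕ) :
    min (n + 1) k ≤ (cutBall g' k).ncard ∧ (cutBall g' k).ncard ≤ min (n + 1) (k + 1) := by
  obtain ⟨h1, h2⟩ := ih k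
  by_cases hk : treeLen e ≤ k
  · have : cutBall g' k = insert e (cutBall g k) := by
      ext x
      simp only [cutBall, hcut, mem_ofPred_eq, mem_insert_iff]
      constructor
      · tauto
      · rintro (rfl | h)
        · exact ⟨Or.inl rfl, hk⟩
        · tauto
    rw [this, ncard_insert_of_notMem (fun h => he h.1) (cutBall_finite g k)]
    omega
  · have : cutBall g' k = cutBall g k := by
      ext x
      simp only [cutBall, hcut, mem_ofPred_eq, mem_insert_iff]
      constructor
      · rintro ⟨rfl | h, hx⟩
        · exact absurd hx hk
        · exact ⟨h, hx⟩
      · tauto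
    rw [this]
    omega

/-- The edges crossed by a minimal word are distinct, and the `i`-th one has tree length `i - 1` or
`i`. A newly crossed edge cannot already lie in `cut g`, as by `treeLen_le_of_mem_cut` its far
endpoint would then be closer to the base vertex than minimality allows. -/
lemma cut_structure {n : ℕ} {g : FPZ H} (hg : Reach n g) (hn : treeLen g = n) (k : ℕ) :
    min n k ≤ (cutBall g k).ncard ∧ (cutBall g k).ncard ≤ min n (k + 1) := by
  induction hg generalizing k with
  | one =>
    have : cutBall (1 : FPZ H) k = ∅ := eq_empty_of_forall_notMem fun x hx => hx.1 (fox_one x)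
    simp [this]
  | mul_inl h _ ih =>
    rw [treeLen_mul_inl] at hn
    simp only [cutBall, cut_mul_inl]
    exact ih hn k
  | @mul_y n g hg ih =>
    have h1 := treeLen_mul_y_le g
    have h2 := treeLen_le hg
    have he : g ∉ cut g := fun h => by
      have := (treeLen_le_of_mem_cut hg h).2
      omega
    exact cutBall_step (cut_mul_y he) he (by omega) (by omega) (ih (by omega)) k
  | @mul_y_inv n g hg ih =>
    have h1 := treeLen_mul_y_inv_le g
    have h2 := treeLen_le hg
    have he : g * (fpzY H)⁻¹ ∉ cut g := fun h => by
      have := (treeLen_le_of_mem_cut hg h).1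
      omega
    exact cutBall_step (cut_mul_y_inv he) he (by omega) (by omega) (ih (by omega)) k

/-! ### Comparison with the word metric -/

/-- The letters `H ∪ {y}` together with their inverses. -/
abbrev letters (H : Type*) [Group H] : Set (FPZ H) :=
  (Set.range (⇑(fpzInl H)) ∪ {fpzY H}) ∪ (Set.range (⇑(fpzInl H)) ∪ {fpzY H})⁻¹

lemma letters_cases {x : FPZ H} (hx : x ∈ letters H) :
    (∃ h, x = fpzInl H h) ∨ x = fpzY H ∨ x = (fpzY H)⁻¹ := by
  rcases hx with (⟨h, rfl⟩ | hx) | hx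
  · exact Or.inl ⟨h, rfl⟩
  · exact Or.inr (Or.inl hx)
  · rcases hx with ⟨h, hh⟩ | hx
    · exact Or.inl ⟨h⁻¹, by rw [map_inv, hh, inv_inv]⟩
    · exact Or.inr (Or.inr (by rw [← inv_inv x]; exact congrArg _ hx))

/-- A word of shape `h₀ y^{±1} h₁ ⋯ y^{±1} hₙ`, with the last `H`-letter split off. -/
lemma Reach.exists_list {n : ℕ} {g : FPZ H} (hg : Reach n g) :
    ∃ (l : List (FPZ H)) (h : H), l.length = 2 * n ∧ (∀ x ∈ l, x ∈ letters H) ∧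
      l.prod * fpzInl H h = g := by
  induction hg with
  | one => exact ⟨[], 1, by simp⟩
  | mul_inl h' _ ih =>
    obtain ⟨l, h, h1, h2, rfl⟩ := ih
    exact ⟨l, h * h', h1, h2, by rw [map_mul, mul_assoc]⟩
  | mul_y _ ih =>
    obtain ⟨l, h, h1, h2, rfl⟩ := ih
    refine ⟨l ++ [fpzInl H h, fpzY H], 1, by simp [h1]; ring, ?_, by simp [mul_assoc]⟩
    intro x hx
    simp only [List.mem_append, List.mem_cons, List.not_mem_nil, or_false] at hx
    rcases hx with hx | rfl | rfl
    · exact h2 x hx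
    · exact Or.inl (Or.inl ⟨h, rfl⟩)
    · exact Or.inl (Or.inr rfl)
  | mul_y_inv _ ih =>
    obtain ⟨l, h, h1, h2, rfl⟩ := ih
    refine ⟨l ++ [fpzInl H h, (fpzY H)⁻¹], 1, by simp [h1]; ring, ?_, by simp [mul_assoc]⟩
    intro x hx
    simp only [List.mem_append, List.mem_cons, List.not_mem_nil, or_false] at hx
    rcases hx with hx | rfl | rfl
    · exact h2 x hx
    · exact Or.inl (Or.inl ⟨h, rfl⟩)
    · exact Or.inr (Or.inr (by simp))

lemma exists_word (g : FPZ H) : ∃ l : List (FPZ H), l.length = 2 * treeLen g + 1 ∧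
    (∀ x ∈ l, x ∈ letters H) ∧ l.prod = g := by
  obtain ⟨l, h, h1, h2, h3⟩ := (reach_treeLen g).exists_list
  refine ⟨l ++ [fpzInl H h], by simp [h1], ?_, by simpa using h3⟩
  intro x hx
  simp only [List.mem_append, List.mem_singleton] at hx
  rcases hx with hx | rfl
  · exact h2 x hx
  · exact Or.inl (Or.inl ⟨h, rfl⟩)

lemma wordDist_le_treeLen (a b : FPZ H) :
    wordDist (Set.range (⇑(fpzInl H)) ∪ {fpzY H}) a b ≤ 2 * treeLen (a⁻¹ * b) + 1 :=
  Nat.sInf_le (exists_word _)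

lemma cut_mul_subset (a b : FPZ H) : cut (a * b) ⊆ cut a ∪ (fun x => a * x) '' cut b := by
  intro x hx
  by_cases h : fox a x = 1
  · right
    rw [cut, mem_ofPred_eq, fox_mul, h, one_mul] at hx
    exact ⟨_, hx, mul_inv_cancel_left a x⟩
  · exact Or.inl h

lemma list_bounds (l : List (FPZ H)) (hl : ∀ x ∈ l, x ∈ letters H) :
    treeLen l.prod ≤ l.length ∧ (cut l.prod).ncard ≤ l.length := by
  induction l with
  | nil =>
    have : cut (1 : FPZ H) = ∅ := eq_empty_of_forall_notMem fun x hx => hx (fox_one x)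
    simpa [this] using treeLen_le (Reach.one (H := H))
  | cons a l ih =>
    obtain ⟨h1, h2⟩ := ih fun x hx => hl x (List.mem_cons_of_mem _ hx)
    have ha : treeLen a ≤ 1 ∧ (cut a).ncard ≤ 1 := by
      have key : ∀ e, cut a ⊆ {e} → (cut a).ncard ≤ 1 := fun e he => by
        simpa using ncard_le_ncard he (finite_singleton e)
      rcases letters_cases (hl a List.mem_cons_self) with ⟨h, rfl⟩ | rfl | rfl
      · exact ⟨(treeLen_le (Reach.inl h)).trans zero_le_one,
          key 1 fun x hx => absurd (fox_inl h x) hx⟩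
      · exact ⟨treeLen_le Reach.y, key 1 fun x hx => (fox_y x).1 hx⟩
      · refine ⟨treeLen_le Reach.y_inv, key (fpzY H)⁻¹ fun x hx => ?_⟩
        have := cut_mul_y_inv_subset (1 : FPZ H) (by rwa [one_mul])
        rcases this with h | h
        · simpa using h
        · exact absurd (fox_one x) h
    have h3 := treeLen_mul_le a l.prod
    have h4 := ncard_le_ncard (cut_mul_subset a l.prod)
      ((cut_finite a).union ((cut_finite l.prod).image _))
    have h5 := ncard_union_le (cut a) ((fun x => a * x) '' cut l.prod)
    have h6 := ncard_image_le (f := fun x => a * x) (cut_finite l.prod)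
    simp only [List.prod_cons, List.length_cons]
    omega

lemma bounds_of_wordDist_le {a b : FPZ H} {r : ℕ}
    (h : wordDist (Set.range (⇑(fpzInl H)) ∪ {fpzY H}) a b ≤ r) :
    treeLen (a⁻¹ * b) ≤ r ∧ (cut (a⁻¹ * b)).ncard ≤ r := by
  obtain ⟨l, h1, h2, h3⟩ := Nat.sInf_mem (s := {n : ℕ | ∃ l : List (FPZ H), l.length = n ∧
    (∀ x ∈ l, x ∈ letters H) ∧ l.prod = a⁻¹ * b}) ⟨_, exists_word (a⁻¹ * b)⟩
  have := list_bounds l h2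
  rw [h3, h1] at this
  exact ⟨this.1.trans h, this.2.trans h⟩

/-! ### Counting -/

/-- If `g` and `u⁻¹gu` are short, then `g` maps some edge of `cut u` close to the base vertex to an
edge of `cut u`, again close to the base vertex. -/
lemma exists_edge {r : ℕ} {u g : FPZ H} (hu : 2 * r + 1 ≤ treeLen u) (hg : treeLen g ≤ r)
    (hg1 : (cut g).ncard ≤ r) (hg2 : (cut (u⁻¹ * (g * u))).ncard ≤ r) :
    ∃ e ∈ cutBall u (2 * r + 1), g * e ∈ cutBall u (3 * r + 1) := by
  by_contra! hcon
  have hsub : (fun x => g * x) '' cutBall u (2 * r + 1) ⊆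
      cut g ∪ (fun x => u * x) '' cut (u⁻¹ * (g * u)) := by
    rintro _ ⟨e, he, rfl⟩
    have hge : fox u (g * e) = 1 := by
      by_contra h
      refine hcon e he ⟨h, ?_⟩
      have := treeLen_mul_le g e
      have := he.2
      omega
    have h1 : fox (g * u) (g * e) = fox g (g * e) * fox u e := by
      rw [fox_mul, inv_mul_cancel_left]
    have h2 := fox_mul u (u⁻¹ * (g * u)) (g * e)
    rw [mul_inv_cancel_left, h1, hge, one_mul] at h2
    by_cases h3 : fox g (g * e) = 1
    · right
      refine ⟨u⁻¹ * (g * e), ?_, mul_inv_cancel_left _ _⟩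
      rw [h3, one_mul] at h2
      rw [cut, mem_ofPred_eq, ← h2]
      exact he.1
    · exact Or.inl h3
  have h4 := ncard_le_ncard hsub ((cut_finite g).union ((cut_finite _).image _))
  rw [ncard_image_of_injective _ (mul_right_injective g)] at h4
  have h5 := ncard_union_le (cut g) ((fun x => u * x) '' cut (u⁻¹ * (g * u)))
  have h6 := ncard_image_le (f := fun x => u * x) (cut_finite (u⁻¹ * (g * u)))
  have h7 := (cut_structure (reach_treeLen u) rfl (2 * r + 1)).1
  omega

lemma short_conj_finite {r : ℕ} {u : FPZ H} (hu : 2 * r + 1 ≤ treeLen u) :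
    ∃ T : Set (FPZ H), T.Finite ∧ T.ncard ≤ (2 * r + 2) * (3 * r + 2) ∧
      ∀ g, treeLen g ≤ r → (cut g).ncard ≤ r → (cut (u⁻¹ * (g * u))).ncard ≤ r → g ∈ T := by
  have hfin := (cutBall_finite u (2 * r + 1)).prod (cutBall_finite u (3 * r + 1))
  refine ⟨(fun p : FPZ H × FPZ H => p.2 * p.1⁻¹) ''
    (cutBall u (2 * r + 1) ×ˢ cutBall u (3 * r + 1)), hfin.image _, ?_, ?_⟩
  · refine (ncard_image_le hfin).trans ?_
    rw [ncard_prod]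
    have h1 := (cut_structure (reach_treeLen u) rfl (2 * r + 1)).2
    have h2 := (cut_structure (reach_treeLen u) rfl (3 * r + 1)).2
    exact Nat.mul_le_mul (by omega) (by omega)
  · intro g h1 h2 h3
    obtain ⟨e, he, hge⟩ := exists_edge hu h1 h2 h3
    exact ⟨(e, g * e), ⟨he, hge⟩, mul_inv_cancel_right _ _⟩

end FreeProductCut

/-- The left-multiplication action of `G = H * ℤ` on itself with the
word metric for `H ∪ {y}` is acylindrical. -/
theorem relative_cayley_graph_action_acylindrical (H : Type*) [Group H] :
    AcylindricalLeftMul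
      (fun a b : FPZ H => (wordDist (Set.range (⇑(fpzInl H)) ∪ {fpzY H}) a b : ℝ)) := by
  intro R hR
  set r := ⌊R⌋₊ with hr
  -- A word distance of at least `4r + 3` forces a tree distance of at least `2r + 1`.
  refine ⟨(2 * r + 2) * (3 * r + 2), ((4 * r + 3 : ℕ) : ℝ), by positivity, by positivity, ?_⟩
  intro x y hxy
  have hu : 2 * r + 1 ≤ treeLen (x⁻¹ * y) := by
    have h1 := wordDist_le_treeLen x y
    have h2 : 4 * r + 3 ≤ wordDist (Set.range (⇑(fpzInl H)) ∪ {fpzY H}) x y := by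
      exact Nat.cast_le.1 hxy
    omega
  obtain ⟨T, hT, hcard, hmem⟩ := short_conj_finite hu
  have hinj : Function.Injective fun g : FPZ H => x * g * x⁻¹ := fun a b h => by simpa using h
  have hsub : {g : FPZ H | (wordDist (Set.range (⇑(fpzInl H)) ∪ {fpzY H}) x (g * x) : ℝ) ≤ R ∧
      (wordDist (Set.range (⇑(fpzInl H)) ∪ {fpzY H}) y (g * y) : ℝ) ≤ R} ⊆
      (fun g : FPZ H => x * g * x⁻¹) '' T := by
    rintro g ⟨h1, h2⟩
    have h3 := bounds_of_wordDist_le (Nat.le_floor h1)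
    have h4 := bounds_of_wordDist_le (Nat.le_floor h2)
    refine ⟨x⁻¹ * (g * x), hmem _ h3.1 h3.2 ?_, by group⟩
    have : (x⁻¹ * y)⁻¹ * (x⁻¹ * (g * x) * (x⁻¹ * y)) = y⁻¹ * (g * y) := by group
    rw [this]
    exact h4.2
  refine ⟨(hT.image _).subset hsub, (ncard_le_ncard hsub (hT.image _)).trans ?_⟩
  exact (ncard_image_le hT).trans hcard
end

section
/- For all λ ≥ 1 and C ≥ 0 there exists M ≥ 0 with the following property: for every group H with generating set S, with G = H * ℤ the free product of H with the infinite cyclic group generated by y, every (λ,C)-quasi-geodesic σ : {0,1,…,n} → (G, d_{S∪{y}}) whose endpoints σ(0) and σ(n) lie in the subgroup H satisfies d_{S∪{y}}(σ(i), H) ≤ M for all 0 ≤ i ≤ n; that is, quasi-geodesics in G with endpoints in H stay uniformly close to H. -/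
/-! ### Word metrics -/

section WordMetric

variable {G : Type*} [Group G] {A : Set G}

lemma wordDist_le_length {g h : G} (l : List G) (hl : ∀ x ∈ l, x ∈ A ∪ A⁻¹)
    (hp : l.prod = g⁻¹ * h) : wordDist A g h ≤ l.length :=
  Nat.sInf_le ⟨l, rfl, hl, hp⟩

lemma wordDist_self (g : G) : wordDist A g g = 0 :=
  Nat.le_zero.mp (wordDist_le_length [] (by simp) (by simp))

/-- Generation of `G` by `A` is what makes the infimum in `wordDist` one over a nonempty set. -/
lemma exists_list_wordDist (hA : Subgroup.closure A = ⊤) (g h : G) :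
    ∃ l : List G, l.length = wordDist A g h ∧ (∀ x ∈ l, x ∈ A ∪ A⁻¹) ∧ l.prod = g⁻¹ * h := by
  have hne : {n : ℕ | ∃ l : List G, l.length = n ∧ (∀ x ∈ l, x ∈ A ∪ A⁻¹) ∧
      l.prod = g⁻¹ * h}.Nonempty := by
    have hm : g⁻¹ * h ∈ Subgroup.closure A := by rw [hA]; trivial
    rw [← Subgroup.mem_toSubmonoid, Subgroup.closure_toSubmonoid] at hm
    obtain ⟨l, hl, hp⟩ := Submonoid.exists_list_of_mem_closure hm
    exact ⟨l.length, l, rfl, hl, hp⟩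
  exact Nat.sInf_mem hne

lemma wordDist_comm_le (hA : Subgroup.closure A = ⊤) (g h : G) :
    wordDist A h g ≤ wordDist A g h := by
  obtain ⟨l, hl, hm, hp⟩ := exists_list_wordDist hA g h
  rw [← hl]
  refine (wordDist_le_length (l.map (·⁻¹)).reverse ?_ ?_).trans (by simp)
  · intro x hx
    have := hm x⁻¹ (by simpa using hx)
    simpa [or_comm] using this
  · rw [← List.prod_inv_reverse, hp]; group

lemma wordDist_triangle (hA : Subgroup.closure A = ⊤) (g h k : G) :
    wordDist A g k ≤ wordDist A g h + wordDist A h k := by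
  obtain ⟨l, hl, hm, hp⟩ := exists_list_wordDist hA g h
  obtain ⟨l', hl', hm', hp'⟩ := exists_list_wordDist hA h k
  rw [← hl, ← hl', ← List.length_append]
  refine wordDist_le_length _ ?_ (by rw [List.prod_append, hp, hp']; group)
  intro x hx
  rcases List.mem_append.mp hx with h | h
  exacts [hm x h, hm' x h]

end WordMetric

/-! ### The branches of the Cayley graph of the free product at `H` -/

section BranchPoint

variable {H : Type*} [Group H]

open Classical in
/-- The action of `H` on `G × H` moving the second coordinate only over points of `H`. -/
noncomputable def actH (H : Type*) [Group H] : H →* Function.End (FPZ H × H) where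
  toFun s := fun p => (fpzInl H s * p.1, if p.1 ∈ (fpzInl H).range then s * p.2 else p.2)
  map_one' := by
    funext p
    simp [Function.End.one_def]
  map_mul' s t := by
    funext p
    -- membership in `H` is unchanged under translation by `inl t`
    have key : fpzInl H t * p.1 ∈ (fpzInl H).range ↔ p.1 ∈ (fpzInl H).range :=
      Subgroup.mul_mem_cancel_left _ ⟨t, rfl⟩
    by_cases h : p.1 ∈ (fpzInl H).range
    · refine Prod.ext ?_ ?_
      · change fpzInl H (s * t) * p.1 = fpzInl H s * (fpzInl H t * p.1)
        rw [map_mul, mul_assoc]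
      · exact (if_pos h).trans ((mul_assoc s t _).trans
          (((if_pos (key.mpr h)).trans (congrArg _ (if_pos h))).symm))
    · refine Prod.ext ?_ ?_
      · change fpzInl H (s * t) * p.1 = fpzInl H s * (fpzInl H t * p.1)
        rw [map_mul, mul_assoc]
      · exact (if_neg h).trans (((if_neg (mt key.mp h)).trans (if_neg h)).symm)

/-- The action of `ℤ` on `G × H` by left translation of the first coordinate. -/
def actZ (H : Type*) [Group H] : Multiplicative ℤ →* Function.End (FPZ H × H) where
  toFun k := fun p => ((Monoid.Coprod.inr k : FPZ H) * p.1, p.2)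
  map_one' := by
    funext p
    simp [Function.End.one_def]
  map_mul' s t := by
    funext p
    refine Prod.ext ?_ rfl
    change (Monoid.Coprod.inr (s * t) : FPZ H) * p.1 =
      Monoid.Coprod.inr s * (Monoid.Coprod.inr t * p.1)
    rw [map_mul, mul_assoc]

/-- The action of `H * ℤ` on `G × H` induced by `actH` and `actZ`. -/
noncomputable def actG (H : Type*) [Group H] : FPZ H →* Function.End (FPZ H × H) :=
  Monoid.Coprod.lift (actH H) (actZ H)

lemma actG_fst (g : FPZ H) (p : FPZ H × H) : (actG H g p).1 = g * p.1 := by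
  induction g using Monoid.Coprod.induction_on generalizing p with
  | inl h => rw [actG, Monoid.Coprod.lift_apply_inl]; rfl
  | inr k => rw [actG, Monoid.Coprod.lift_apply_inr]; rfl
  | mul a b ha hb =>
    rw [map_mul, mul_assoc, ← hb, ← ha]
    rfl

/-- The point `h` of `H` at which the branch of the Cayley graph containing `g` is attached: the
leading `H`-syllable of `g`. The inversions turn the left action `actG` into right
multiplication, that is, into motion along edges of the Cayley graph. -/
noncomputable def branchPt (g : FPZ H) : H := ((actG H g⁻¹ (1, 1)).2)⁻¹

lemma branchPt_mul_inr (g : FPZ H) (k : Multiplicative ℤ) :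
    branchPt (g * Monoid.Coprod.inr k) = branchPt g := by
  rw [branchPt, branchPt, mul_inv_rev, map_mul, ← map_inv, actG, Monoid.Coprod.lift_apply_inr]
  rfl

lemma branchPt_mul_inl_of_notMem (g : FPZ H) (s : H) (hg : g ∉ (fpzInl H).range) :
    branchPt (g * fpzInl H s) = branchPt g := by
  have hg' : (actG H g⁻¹ (1, 1)).1 ∉ (fpzInl H).range := by
    rw [actG_fst, mul_one]
    exact fun h => hg (inv_mem_iff.mp h)
  have : actG H (fpzInl H s⁻¹) = actH H s⁻¹ := Monoid.Coprod.lift_apply_inl _ _ _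
  rw [branchPt, branchPt, mul_inv_rev, map_mul, ← map_inv, this, Function.End.mul_def]
  exact congrArg _ (if_neg hg')

lemma branchPt_inl (s : H) : branchPt (fpzInl H s) = s := by
  have : actG H (fpzInl H s⁻¹) = actH H s⁻¹ := Monoid.Coprod.lift_apply_inl _ _ _
  rw [branchPt, ← map_inv, this]
  have h1 : (actH H s⁻¹ (1, 1)).2 = s⁻¹ * 1 := if_pos (one_mem _)
  rw [h1]; simp

/-- The generating set `S ∪ {y}` of `H * ℤ`. -/
abbrev fpzGen (S : Set H) : Set (FPZ H) := (⇑(fpzInl H)) '' S ∪ {fpzY H}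

/-- An edge of the Cayley graph along which `branchPt` changes starts at a point of `H`. -/
lemma branchPt_mul_generator {S : Set H} (g t : FPZ H) (ht : t ∈ fpzGen S ∪ (fpzGen S)⁻¹) :
    branchPt (g * t) = branchPt g ∨ g = fpzInl H (branchPt g) := by
  by_cases hg : g ∈ (fpzInl H).range
  · obtain ⟨h, rfl⟩ := hg
    exact Or.inr (by rw [branchPt_inl])
  · left
    have ht' : (∃ s : H, t = fpzInl H s) ∨ ∃ k, t = Monoid.Coprod.inr k := by
      rcases ht with (⟨s, -, rfl⟩ | h) | (⟨s, -, h⟩ | (h : t⁻¹ = fpzY H))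
      · exact Or.inl ⟨s, rfl⟩
      · exact Or.inr ⟨_, h⟩
      · exact Or.inl ⟨s⁻¹, by rw [map_inv, h, inv_inv]⟩
      · exact Or.inr ⟨(Multiplicative.ofAdd 1)⁻¹, by rw [map_inv]; exact inv_eq_iff_eq_inv.mp h⟩
    rcases ht' with ⟨s, rfl⟩ | ⟨k, rfl⟩
    · exact branchPt_mul_inl_of_notMem g s hg
    · exact branchPt_mul_inr g k

lemma closure_fpzGen {S : Set H} (hS : Subgroup.closure S = ⊤) :
    Subgroup.closure (fpzGen S) = ⊤ := by
  rw [eq_top_iff]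
  intro g _
  induction g using Monoid.Coprod.induction_on with
  | inl h =>
    have hh : fpzInl H h ∈ (Subgroup.closure S).map (fpzInl H) :=
      Subgroup.mem_map_of_mem _ (by rw [hS]; trivial)
    rw [MonoidHom.map_closure] at hh
    exact Subgroup.closure_mono Set.subset_union_left hh
  | inr k =>
    have hk : (Monoid.Coprod.inr k : FPZ H) = fpzY H ^ (Multiplicative.toAdd k) := by
      rw [fpzY, ← map_zpow, ← ofAdd_zsmul]; simp
    have hy : fpzY H ∈ Subgroup.closure (fpzGen S) := Subgroup.subset_closure (Or.inr rfl)
    rw [hk]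
    exact Subgroup.zpow_mem _ hy _
  | mul a b ha hb => exact mul_mem (ha trivial) (hb trivial)

/-- A path joining two different branches passes through the attaching point of the first. -/
lemma wordDist_branchPt_le {S : Set H} (hS : Subgroup.closure S = ⊤) (g g' : FPZ H)
    (hne : branchPt g' ≠ branchPt g) :
    wordDist (fpzGen S) g (fpzInl H (branchPt g)) ≤ wordDist (fpzGen S) g g' := by
  have hA := closure_fpzGen hS
  have key : ∀ (l : List (FPZ H)) (g : FPZ H), (∀ x ∈ l, x ∈ fpzGen S ∪ (fpzGen S)⁻¹) →
      branchPt (g * l.prod) ≠ branchPt g →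
      wordDist (fpzGen S) g (fpzInl H (branchPt g)) ≤ l.length := by
    intro l
    induction l with
    | nil => intro g _ h; simp at h
    | cons t l ih =>
      intro g hl h
      have ht := hl t (by simp)
      rcases branchPt_mul_generator g t ht with hb | hb
      · have h1 := ih (g * t) (fun x hx => hl x (by simp [hx]))
          (by rwa [hb, mul_assoc, ← List.prod_cons])
        rw [hb] at h1
        have h2 : wordDist (fpzGen S) g (g * t) ≤ 1 :=
          wordDist_le_length [t] (by simpa using ht) (by simp)
        have h3 := wordDist_triangle hA g (g * t) (fpzInl H (branchPt g))
        simp only [List.length_cons]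
        omega
      · rw [← hb, wordDist_self]; exact Nat.zero_le _
  obtain ⟨l, hl, hm, hp⟩ := exists_list_wordDist hA g g'
  rw [← hl]
  exact key l g hm (by rwa [hp, mul_inv_cancel_left])

/-! ### Quasi-geodesics with endpoints in `H` -/

/-- A path in `G` with jumps of length at most `D`, starting in `H`, has reached each of its points
`σ i` only after coming `D`-close to the attaching point of the branch containing `σ i`. -/
lemma exists_close_before {S : Set H} (hS : Subgroup.closure S = ⊤) (σ : ℤ → FPZ H) (n : ℤ)
    (D : ℝ) (hD : 0 ≤ D) (h0 : σ 0 ∈ (fpzInl H).range)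
    (hstep : ∀ j, 0 ≤ j → j + 1 ≤ n → (wordDist (fpzGen S) (σ (j + 1)) (σ j) : ℝ) ≤ D)
    (i : ℤ) (hi : 0 ≤ i) (hin : i ≤ n) :
    ∃ a, 0 ≤ a ∧ a ≤ i ∧
      (wordDist (fpzGen S) (σ a) (fpzInl H (branchPt (σ i))) : ℝ) ≤ D := by
  induction i, hi using Int.leInduction with
  | base =>
    obtain ⟨h, hh⟩ := h0
    refine ⟨0, le_rfl, le_rfl, ?_⟩
    rw [← hh, branchPt_inl, wordDist_self]
    simpa using hD
  | succ j hj ih =>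
    by_cases hb : branchPt (σ j) = branchPt (σ (j + 1))
    · obtain ⟨a, ha, haj, hd⟩ := ih (by omega)
      exact ⟨a, ha, by omega, by rwa [← hb]⟩
    · refine ⟨j + 1, by omega, le_rfl, le_trans ?_ (hstep j hj hin)⟩
      exact_mod_cast wordDist_branchPt_le hS _ _ hb

end BranchPoint

universe u

/-- Quasi-geodesics in `G = H * ℤ` with endpoints in the factor `H`
stay uniformly close to `H`, with a bound depending only on the quasi-geodesic
constants. -/
theorem quasi_geodesics_with_endpoints_in_factor_stay_close (lam C : ℝ)
    (hlam : 1 ≤ lam) (hC : 0 ≤ C) :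
    ∃ M : ℝ, 0 ≤ M ∧
      ∀ (H : Type u) [Group H], ∀ S : Set H, Subgroup.closure S = ⊤ →
        ∀ (σ : ℤ → FPZ H) (n : ℤ), 0 ≤ n →
          IsQuasiGeodesicOn
            (fun a b : FPZ H => (wordDist ((⇑(fpzInl H)) '' S ∪ {fpzY H}) a b : ℝ))
            lam C σ n →
          σ 0 ∈ (fpzInl H).range → σ n ∈ (fpzInl H).range →
          ∀ i : ℤ, 0 ≤ i → i ≤ n → ∃ h : H,
            (wordDist ((⇑(fpzInl H)) '' S ∪ {fpzY H}) (σ i) (fpzInl H h) : ℝ) ≤ M := by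
  have hl0 : 0 < lam := by linarith
  refine ⟨lam * (lam * (2 * (lam + C) + C)) + C + (lam + C), by positivity, ?_⟩
  intro H _ S hS σ n hn hσ h0 h1 i hi hin
  have hA := closure_fpzGen hS
  have hD : 0 ≤ lam + C := by positivity
  obtain ⟨a, ha0, hai, hda⟩ := exists_close_before hS σ n (lam + C) hD h0
    (fun j hj hjn => by simpa using (hσ (j + 1) j (by omega) hjn hj (by omega)).2) i hi hin
  -- the same argument for the reversed path
  obtain ⟨b', hb0, hbi, hdb⟩ := exists_close_before hS (fun j => σ (n - j)) n (lam + C) hD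
    (by simpa using h1)
    (fun j hj hjn => by
      simpa using (hσ (n - (j + 1)) (n - j) (by omega) (by omega) (by omega) (by omega)).2)
    (n - i) (by omega) (by omega)
  obtain ⟨b, rfl⟩ : ∃ b, b' = n - b := ⟨n - b', by omega⟩
  simp only [sub_sub_cancel] at hdb
  refine ⟨branchPt (σ i), ?_⟩
  set p := fpzInl H (branchPt (σ i))
  have hab : (wordDist (fpzGen S) (σ a) (σ b) : ℝ) ≤ 2 * (lam + C) := by
    have t1 : (wordDist (fpzGen S) (σ a) (σ b) : ℝ) ≤
        wordDist (fpzGen S) (σ a) p + wordDist (fpzGen S) (σ b) p := by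
      exact_mod_cast (wordDist_triangle hA (σ a) p (σ b)).trans
        (Nat.add_le_add_left (wordDist_comm_le hA (σ b) p) _)
    linarith
  have hai' : (a : ℝ) ≤ i := by exact_mod_cast hai
  have hib' : (i : ℝ) ≤ b := by exact_mod_cast (by omega : i ≤ b)
  have hlen : (i : ℝ) - a ≤ lam * (2 * (lam + C) + C) := by
    have t2 := (hσ a b (by omega) (by omega) (by omega) (by omega)).1
    rw [abs_sub_comm, abs_of_nonneg (by linarith)] at t2
    have t3 : lam⁻¹ * ((b : ℝ) - a) ≤ 2 * (lam + C) + C := by linarith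
    rw [inv_mul_le_iff₀ hl0] at t3
    linarith
  have hia := (hσ i a hi hin (by omega) (by omega)).2
  rw [abs_of_nonneg (by linarith)] at hia
  have hmul := mul_le_mul_of_nonneg_left hlen hl0.le
  have htri : (wordDist (fpzGen S) (σ i) p : ℝ) ≤
      wordDist (fpzGen S) (σ i) (σ a) + wordDist (fpzGen S) (σ a) p := by
    exact_mod_cast wordDist_triangle hA (σ i) (σ a) p
  change (wordDist (fpzGen S) (σ i) p : ℝ) ≤ _
  linarith
end
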